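/- The following are equivalent: (i) there exist measurable functions f₁ : ℝ^d → [0,∞) and f₂ : S^k → [0,∞) such that ρ(y,u) = f₁(y)f₂(u) for all (y,u) ∈ ℝ^d × S^k (first order separability); (ii) ρ(y,u)·E(N) = ρ₁(y)·ρ₂(u) for all (y,u) ∈ ℝ^d × S^k. -/

import Mathlib

open MeasureTheory Real Set
open scoped ENNReal NNReal RealInnerProductSpace Classical

noncomputable section

/-- `d`-dimensional Euclidean space. -/
abbrev Eucl (d : ℕ) : Type := EuclideanSpace ℝ (Fin d)

/-- The unit `k`-sphere in `ℝ^{k+1}`. -/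
abbrev Sph (k : ℕ) : Type := Metric.sphere (0 : EuclideanSpace ℝ (Fin (k+1))) 1

/-- The surface measure `ν` on the `k`-sphere: the `k`-dimensional Hausdorff measure. -/
noncomputable def sphMeasure (k : ℕ) : Measure (Sph k) := μH[k]

/-- The geodesic distance `d(u,v) = arccos ⟨u,v⟩` on the `k`-sphere. -/
noncomputable def gd {k : ℕ} (u v : Sph k) : ℝ :=
  Real.arccos ⟪(u : EuclideanSpace ℝ (Fin (k+1))), (v : EuclideanSpace ℝ (Fin (k+1)))⟫

variable {d k : ℕ}

/-- The product measure `μ` on `ℝ^d × S^k` restricted to `W × S^k`. -/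
noncomputable def muW (W : Set (Eucl d)) (k : ℕ) : Measure (Eucl d × Sph k) :=
  ((volume : Measure (Eucl d)).restrict W).prod (sphMeasure k)

/-- Marginal spatial intensity `ρ₁(y) = ∫_{S^k} ρ(y,u) dν(u)`. -/
noncomputable def rho1 (ρ : Eucl d × Sph k → ℝ≥0) (y : Eucl d) : ℝ≥0∞ :=
  ∫⁻ u, (ρ (y, u) : ℝ≥0∞) ∂(sphMeasure k)

/-- Marginal spherical intensity `ρ₂(u) = ∫_W ρ(y,u) dy`. -/
noncomputable def rho2 (W : Set (Eucl d)) (ρ : Eucl d × Sph k → ℝ≥0) (u : Sph k) : ℝ≥0∞ :=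
  ∫⁻ y in W, (ρ (y, u) : ℝ≥0∞)

/-- The expected number of points `E(N) = ∫_{W × S^k} ρ dμ`. -/
noncomputable def meanN (W : Set (Eucl d)) (ρ : Eucl d × Sph k → ℝ≥0) : ℝ≥0∞ :=
  ∫⁻ p, (ρ p : ℝ≥0∞) ∂(muW W k)

/-- The pair correlation function `g₁` of the spatial components. -/
noncomputable def gfun1 (ρ : Eucl d × Sph k → ℝ≥0)
    (g : Eucl d × Sph k → Eucl d × Sph k → ℝ≥0) (y₁ y₂ : Eucl d) : ℝ≥0∞ :=
  if 0 < rho1 ρ y₁ * rho1 ρ y₂ then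
    (∫⁻ u₁, (∫⁻ u₂, ((ρ (y₁, u₁) : ℝ≥0∞) * (ρ (y₂, u₂) : ℝ≥0∞) *
        (g (y₁, u₁) (y₂, u₂) : ℝ≥0∞)) ∂(sphMeasure k)) ∂(sphMeasure k))
      / (rho1 ρ y₁ * rho1 ρ y₂)
  else 0

/-- The pair correlation function `g₂` of the spherical components. -/
noncomputable def gfun2 (W : Set (Eucl d)) (ρ : Eucl d × Sph k → ℝ≥0)
    (g : Eucl d × Sph k → Eucl d × Sph k → ℝ≥0) (u₁ u₂ : Sph k) : ℝ≥0∞ :=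
  if 0 < rho2 W ρ u₁ * rho2 W ρ u₂ then
    (∫⁻ y₁ in W, ∫⁻ y₂ in W, ((ρ (y₁, u₁) : ℝ≥0∞) * (ρ (y₂, u₂) : ℝ≥0∞) *
        (g (y₁, u₁) (y₂, u₂) : ℝ≥0∞)))
      / (rho2 W ρ u₁ * rho2 W ρ u₂)
  else 0

/-- The second factorial moment `E{N(N−1)}`. -/
noncomputable def momN2 (W : Set (Eucl d)) (ρ : Eucl d × Sph k → ℝ≥0)
    (g : Eucl d × Sph k → Eucl d × Sph k → ℝ≥0) : ℝ≥0∞ :=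
  ∫⁻ p, (∫⁻ q, ((ρ p : ℝ≥0∞) * (ρ q : ℝ≥0∞) * (g p q : ℝ≥0∞)) ∂(muW W k)) ∂(muW W k)

/-- The constant `β = E(N)² / E{N(N−1)}`. -/
noncomputable def betaC (W : Set (Eucl d)) (ρ : Eucl d × Sph k → ℝ≥0)
    (g : Eucl d × Sph k → Eucl d × Sph k → ℝ≥0) : ℝ≥0∞ :=
  (meanN W ρ) ^ 2 / momN2 W ρ g

/-!
If `ρ(x,y) = f₁(x) f₂(y)`, Tonelli's theorem factors the total mass and both marginals through
`∫ f₁` and `∫ f₂`, and the product formula is an identity between these factors. Conversely, the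
product formula makes `ρ(x,y) ρ(x',y')` symmetric under exchanging `y` and `y'`, so any point with
`ρ(x₀,y₀) ≠ 0` gives `ρ(x,y) = ρ(x,y₀) · ρ(x₀,y) / ρ(x₀,y₀)`; unlike the marginals, these factors
are visibly finite. Tonelli's theorem applies because the Hausdorff measure on the sphere is
finite: the inverses of stereographic projections are locally Lipschitz.
-/

section Separability

variable {X Y : Type*}

theorem mul_eq_mul_swap_of_forall_mul_eq_mul {M : Type*} [CommSemigroup M] {R : X × Y → M} {c : M}
    {a : X → M} {b : Y → M} (hc : IsRightRegular c) (h : ∀ x y, R (x, y) * c = a x * b y)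
    (x x' : X) (y y' : Y) : R (x, y) * R (x', y') = R (x, y') * R (x', y) := by
  refine hc (hc ?_)
  calc R (x, y) * R (x', y') * c * c
      = (R (x, y) * c) * (R (x', y') * c) := by ac_rfl
    _ = (R (x, y') * c) * (R (x', y) * c) := by simp only [h]; ac_rfl
    _ = R (x, y') * R (x', y) * c * c := by ac_rfl

variable [MeasurableSpace X] [MeasurableSpace Y]

theorem exists_measurable_forall_eq_mul_of_mul_eq_mul {G : Type*} [CommGroupWithZero G]
    [MeasurableSpace G] [MeasurableMul G] {R : X × Y → G} (hR : Measurable R) {x₀ : X} {y₀ : Y}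
    (h₀ : R (x₀, y₀) ≠ 0) (h : ∀ x y, R (x, y) * R (x₀, y₀) = R (x, y₀) * R (x₀, y)) :
    ∃ (f : X → G) (g : Y → G), Measurable f ∧ Measurable g ∧ ∀ x y, R (x, y) = f x * g y := by
  refine ⟨fun x ↦ R (x, y₀), fun y ↦ R (x₀, y) * (R (x₀, y₀))⁻¹, by fun_prop,
    (hR.comp measurable_prodMk_left).mul_const _, fun x y ↦ ?_⟩
  rw [← mul_assoc, ← h, mul_inv_cancel_right₀ h₀]

variable {μ : Measure X} {ν : Measure Y}

theorem mul_lintegral_prod_eq_lintegral_mul_lintegral_of_eq_mul [SFinite ν] {R : X × Y → ℝ≥0∞}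
    {f : X → ℝ≥0∞} {g : Y → ℝ≥0∞} (hf : AEMeasurable f μ) (hg : AEMeasurable g ν)
    (hR : ∀ x y, R (x, y) = f x * g y) (x : X) (y : Y) :
    R (x, y) * ∫⁻ p, R p ∂μ.prod ν = (∫⁻ v, R (x, v) ∂ν) * ∫⁻ u, R (u, y) ∂μ := by
  have total : ∫⁻ p, R p ∂μ.prod ν = (∫⁻ u, f u ∂μ) * ∫⁻ v, g v ∂ν :=
    (lintegral_congr fun p : X × Y ↦ hR p.1 p.2).trans (lintegral_prod_mul hf hg)
  have marginal_left : ∫⁻ v, R (x, v) ∂ν = f x * ∫⁻ v, g v ∂ν := by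
    simp only [hR, lintegral_const_mul'' _ hg]
  have marginal_right : ∫⁻ u, R (u, y) ∂μ = (∫⁻ u, f u ∂μ) * g y := by
    simp only [hR, lintegral_mul_const'' _ hf]
  rw [total, marginal_left, marginal_right, hR]
  ring

theorem first_order_separability_iff_general [SFinite ν] {ρ : X × Y → ℝ≥0} (hρ : Measurable ρ)
    (hpos : ∫⁻ p, (ρ p : ℝ≥0∞) ∂μ.prod ν ≠ 0) (hfin : ∫⁻ p, (ρ p : ℝ≥0∞) ∂μ.prod ν ≠ ⊤) :
    (∃ (f₁ : X → ℝ≥0) (f₂ : Y → ℝ≥0), Measurable f₁ ∧ Measurable f₂ ∧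
        ∀ x y, ρ (x, y) = f₁ x * f₂ y) ↔
      ∀ x y, (ρ (x, y) : ℝ≥0∞) * ∫⁻ p, (ρ p : ℝ≥0∞) ∂μ.prod ν =
        (∫⁻ v, (ρ (x, v) : ℝ≥0∞) ∂ν) * ∫⁻ u, (ρ (u, y) : ℝ≥0∞) ∂μ := by
  constructor
  · rintro ⟨f₁, f₂, hf₁, hf₂, h⟩
    exact mul_lintegral_prod_eq_lintegral_mul_lintegral_of_eq_mul (R := fun p ↦ (ρ p : ℝ≥0∞))
      hf₁.coe_nnreal_ennreal.aemeasurable hf₂.coe_nnreal_ennreal.aemeasurable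
      fun x y ↦ by rw [h, ENNReal.coe_mul]
  · intro h
    obtain ⟨⟨x₀, y₀⟩, h₀⟩ : ∃ p, ρ p ≠ 0 := by
      by_contra! hzero
      exact hpos (by simp [hzero])
    have regular : IsRightRegular (∫⁻ p, (ρ p : ℝ≥0∞) ∂μ.prod ν) :=
      (ENNReal.isUnit_iff.2 ⟨hpos, hfin⟩).isRegular.right
    refine exists_measurable_forall_eq_mul_of_mul_eq_mul hρ h₀ fun x y ↦ ?_
    exact_mod_cast mul_eq_mul_swap_of_forall_mul_eq_mul (R := fun p ↦ (ρ p : ℝ≥0∞))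
      regular h x x₀ y y₀

end Separability

section HausdorffMeasure

open Filter Metric Module

theorem finiteAtFilter_map_hausdorffMeasure_of_lipschitzOnWith {X Y : Type*}
    [EMetricSpace X] [EMetricSpace Y] [MeasurableSpace X] [BorelSpace X]
    [MeasurableSpace Y] [BorelSpace Y] {s : ℝ} (hs : 0 ≤ s)
    {l : Filter X} {f : X → Y} {K : ℝ≥0} {t : Set X} (hf : LipschitzOnWith K f t) (ht : t ∈ l)
    (hl : (μH[s] : Measure X).FiniteAtFilter l) :
    (μH[s] : Measure Y).FiniteAtFilter (map f l) := by
  obtain ⟨r, hr, hr_lt⟩ := hl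
  refine ⟨f '' (t ∩ r), image_mem_map (inter_mem ht hr), ?_⟩
  calc μH[s] (f '' (t ∩ r))
      ≤ K ^ s * μH[s] (t ∩ r) := (hf.mono inter_subset_left).hausdorffMeasure_image_le hs
    _ ≤ K ^ s * μH[s] r := by gcongr; exact inter_subset_right
    _ < ⊤ := ENNReal.mul_lt_top (ENNReal.rpow_lt_top_of_nonneg hs ENNReal.coe_ne_top) hr_lt

variable {E : Type*} [NormedAddCommGroup E] [InnerProductSpace ℝ E]

theorem locallyLipschitz_stereographic_symm {v : E} (hv : ‖v‖ = 1) :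
    LocallyLipschitz (stereographic hv).symm :=
  ((contDiff_stereoInvFunAux (v := v) (m := 1)).comp
    (ℝ ∙ v)ᗮ.subtypeL.contDiff).locallyLipschitz

theorem isFiniteMeasure_hausdorffMeasure_sphere [MeasurableSpace E] [BorelSpace E] (n : ℕ)
    [Fact (finrank ℝ E = n + 1)] : IsFiniteMeasure (μH[n] : Measure (sphere (0 : E) 1)) := by
  have : FiniteDimensional ℝ E := .of_fact_finrank_eq_succ n
  suffices IsLocallyFiniteMeasure (μH[n] : Measure (sphere (0 : E) 1)) from inferInstance
  refine ⟨fun x ↦ ?_⟩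
  have hv := norm_eq_of_mem_sphere (-x)
  have hx : x ∈ (stereographic hv).source := ne_neg_of_mem_unit_sphere ℝ x
  have hdim : finrank ℝ (ℝ ∙ (-x).val)ᗮ = n :=
    Submodule.finrank_orthogonal_span_singleton (ne_zero_of_mem_unit_sphere (-x))
  have haar : (μH[n] : Measure (ℝ ∙ (-x).val)ᗮ).IsAddHaarMeasure :=
    hdim ▸ isAddHaarMeasure_hausdorffMeasure
  obtain ⟨K, t, ht, hK⟩ := locallyLipschitz_stereographic_symm hv (stereographic hv x)
  rw [← (stereographic hv).symm_map_nhds_eq hx]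
  exact finiteAtFilter_map_hausdorffMeasure_of_lipschitzOnWith n.cast_nonneg hK ht
    (Measure.finiteAt_nhds _ _)

end HausdorffMeasure

open scoped EuclideanSpace in
instance isFiniteMeasure_sphMeasure (k : ℕ) : IsFiniteMeasure (sphMeasure k) :=
  isFiniteMeasure_hausdorffMeasure_sphere k

/-- First order separability `ρ(y,u) = f₁(y)f₂(u)` is equivalent to
`ρ(y,u)·E(N) = ρ₁(y)·ρ₂(u)`. -/
theorem first_order_separability_iff (d k : ℕ) (hd : 1 ≤ d) (hk : 1 ≤ k)
    (W : Set (Eucl d)) (hWm : MeasurableSet W) (hWb : Bornology.IsBounded W)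
    (ρ : Eucl d × Sph k → ℝ≥0) (hρ : Measurable ρ)
    (hEN₀ : 0 < meanN W ρ) (hEN₁ : meanN W ρ < ⊤) :
    (∃ (f₁ : Eucl d → ℝ≥0) (f₂ : Sph k → ℝ≥0), Measurable f₁ ∧ Measurable f₂ ∧
        ∀ (y : Eucl d) (u : Sph k), ρ (y, u) = f₁ y * f₂ u) ↔
      (∀ (y : Eucl d) (u : Sph k),
        (ρ (y, u) : ℝ≥0∞) * meanN W ρ = rho1 ρ y * rho2 W ρ u) := by
  exact first_order_separability_iff_general hρ hEN₀.ne' hEN₁.ne
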